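/- (Theorem 3: soundness and completeness of DS) For every hybrid formula φ: the sequent ⊢ φ is provable in the calculus DS if and only if φ is valid (⊨ φ), i.e., M, w ⊨ φ for every model M and world w. -/

import Mathlib

/-- Hybrid logic formulas over nominals `ℕ` and propositional variables `ℕ`
(the two sorts are kept disjoint by the constructors). -/
inductive Form : Type where
  | prop : ℕ → Form
  | nom : ℕ → Form
  | rel : ℕ → ℕ → Form
  | and : Form → Form → Form
  | or : Form → Form → Form
  | imp : Form → Form → Form
  | neg : Form → Form
  | at_ : ℕ → Form → Form
  | box : Form → Form
  | dia : Form → Form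

/-- A model for hybrid logic: a nonempty set of worlds, an accessibility
relation, a valuation and an assignment of nominals to worlds. -/
structure Model where
  W : Type
  ne : Nonempty W
  R : W → W → Prop
  V : ℕ → W → Prop
  g : ℕ → W

/-- Satisfaction of a formula at a world of a model. -/
def sat (M : Model) : M.W → Form → Prop
  | w, .prop p => M.V p w
  | w, .nom i => M.g i = w
  | _, .rel i j => M.R (M.g i) (M.g j)
  | w, .and φ ψ => sat M w φ ∧ sat M w ψ
  | w, .or φ ψ => sat M w φ ∨ sat M w ψ
  | w, .imp φ ψ => ¬ sat M w φ ∨ sat M w ψ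
  | w, .neg φ => ¬ sat M w φ
  | _, .at_ i φ => sat M (M.g i) φ
  | w, .box φ => ∀ v, M.R w v → sat M v φ
  | w, .dia φ => ∃ v, M.R w v ∧ sat M v φ

/-- A model is named iff every world has a name, i.e. the assignment is surjective. -/
def Model.Named (M : Model) : Prop := Function.Surjective M.g

/-- A formula is valid iff it is true at every world of every model. -/
def Valid (φ : Form) : Prop := ∀ (M : Model) (w : M.W), sat M w φ

/-- Labelled formulas `i : φ` and plain (unlabelled) formulas. -/
inductive LForm : Type where
  | lab : ℕ → Form → LForm
  | plain : Form → LForm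

/-- Elementary formulas: `p`, `i`, `R(i,j)`. -/
def Form.elemF : Form → Prop
  | .prop _ => True
  | .nom _ => True
  | .rel _ _ => True
  | _ => False

/-- Elementary members of a sequent: labelled elementary formulas. -/
def LForm.elemL : LForm → Prop
  | .lab _ φ => φ.elemF
  | .plain _ => False

/-- `Form.occursF k φ`: the nominal `k` occurs in the formula `φ`. -/
def Form.occursF (k : ℕ) : Form → Prop
  | .prop _ => False
  | .nom i => i = k
  | .rel i j => i = k ∨ j = k
  | .and φ ψ => φ.occursF k ∨ ψ.occursF k
  | .or φ ψ => φ.occursF k ∨ ψ.occursF k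
  | .imp φ ψ => φ.occursF k ∨ ψ.occursF k
  | .neg φ => φ.occursF k
  | .at_ i φ => i = k ∨ φ.occursF k
  | .box φ => φ.occursF k
  | .dia φ => φ.occursF k

/-- A nominal occurs in a (labelled) formula. -/
def LForm.occursL (k : ℕ) : LForm → Prop
  | .lab i φ => i = k ∨ φ.occursF k
  | .plain φ => φ.occursF k

/-- The sequent `Γ ⊢ Δ` is (game) valid: for every named model, some labelled formula
of `Δ` is true at (the world named by) its label, or some labelled formula of `Γ` is
false at its label. -/
def SeqValid (Γ Δ : Multiset LForm) : Prop :=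
  ∀ M : Model, M.Named →
    (∃ i φ, LForm.lab i φ ∈ Δ ∧ sat M (M.g i) φ) ∨
    (∃ i φ, LForm.lab i φ ∈ Γ ∧ ¬ sat M (M.g i) φ)

/-- The sequent calculus `DS`. `DS Γ Δ` means that `Γ ⊢ Δ` is provable. -/
inductive DS : Multiset LForm → Multiset LForm → Prop where
  | V {Γ Δ} : (∀ f ∈ Γ, LForm.elemL f) → (∀ f ∈ Δ, LForm.elemL f) → SeqValid Γ Δ →
      DS Γ Δ
  | CL {Γ Δ i φ} : DS (.lab i φ ::ₘ .lab i φ ::ₘ Γ) Δ → DS (.lab i φ ::ₘ Γ) Δ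
  | CR {Γ Δ i φ} : DS Γ (.lab i φ ::ₘ .lab i φ ::ₘ Δ) → DS Γ (.lab i φ ::ₘ Δ)
  | U {i φ} : ¬ Form.occursF i φ → DS 0 {LForm.lab i φ} → DS 0 {LForm.plain φ}
  | Lor {Γ Δ i φ ψ} : DS (.lab i φ ::ₘ Γ) Δ → DS (.lab i ψ ::ₘ Γ) Δ →
      DS (.lab i (.or φ ψ) ::ₘ Γ) Δ
  | Ror1 {Γ Δ i φ ψ} : DS Γ (.lab i φ ::ₘ Δ) → DS Γ (.lab i (.or φ ψ) ::ₘ Δ)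
  | Ror2 {Γ Δ i φ ψ} : DS Γ (.lab i ψ ::ₘ Δ) → DS Γ (.lab i (.or φ ψ) ::ₘ Δ)
  | Land1 {Γ Δ i φ ψ} : DS (.lab i φ ::ₘ Γ) Δ → DS (.lab i (.and φ ψ) ::ₘ Γ) Δ
  | Land2 {Γ Δ i φ ψ} : DS (.lab i ψ ::ₘ Γ) Δ → DS (.lab i (.and φ ψ) ::ₘ Γ) Δ
  | Rand {Γ Δ i φ ψ} : DS Γ (.lab i φ ::ₘ Δ) → DS Γ (.lab i ψ ::ₘ Δ) →
      DS Γ (.lab i (.and φ ψ) ::ₘ Δ)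
  | Limp {Γ Δ i φ ψ} : DS Γ (.lab i φ ::ₘ Δ) → DS (.lab i ψ ::ₘ Γ) Δ →
      DS (.lab i (.imp φ ψ) ::ₘ Γ) Δ
  | Rimp1 {Γ Δ i φ ψ} : DS (.lab i φ ::ₘ Γ) Δ → DS Γ (.lab i (.imp φ ψ) ::ₘ Δ)
  | Rimp2 {Γ Δ i φ ψ} : DS Γ (.lab i ψ ::ₘ Δ) → DS Γ (.lab i (.imp φ ψ) ::ₘ Δ)
  | Lneg {Γ Δ i φ} : DS Γ (.lab i φ ::ₘ Δ) → DS (.lab i (.neg φ) ::ₘ Γ) Δ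
  | Rneg {Γ Δ i φ} : DS (.lab i φ ::ₘ Γ) Δ → DS Γ (.lab i (.neg φ) ::ₘ Δ)
  | Lat {Γ Δ i j φ} : DS (.lab j φ ::ₘ Γ) Δ → DS (.lab i (.at_ j φ) ::ₘ Γ) Δ
  | Rat {Γ Δ i j φ} : DS Γ (.lab j φ ::ₘ Δ) → DS Γ (.lab i (.at_ j φ) ::ₘ Δ)
  | Lbox {Γ Δ i j φ} : DS (.lab j (.or (.neg (.rel i j)) φ) ::ₘ Γ) Δ →
      DS (.lab i (.box φ) ::ₘ Γ) Δ
  | Rbox {Γ Δ i j φ} : (∀ f ∈ Γ, ¬ LForm.occursL j f) → (∀ f ∈ Δ, ¬ LForm.occursL j f) →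
      j ≠ i → ¬ Form.occursF j φ →
      DS Γ (.lab j (.or (.neg (.rel i j)) φ) ::ₘ Δ) → DS Γ (.lab i (.box φ) ::ₘ Δ)
  | Ldia {Γ Δ i j φ} : (∀ f ∈ Γ, ¬ LForm.occursL j f) → (∀ f ∈ Δ, ¬ LForm.occursL j f) →
      j ≠ i → ¬ Form.occursF j φ →
      DS (.lab j (.and (.rel i j) φ) ::ₘ Γ) Δ → DS (.lab i (.dia φ) ::ₘ Γ) Δ
  | Rdia {Γ Δ i j φ} : DS Γ (.lab j (.and (.rel i j) φ) ::ₘ Δ) →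
      DS Γ (.lab i (.dia φ) ::ₘ Δ)

/-!
Soundness is an induction over derivations. A rule with a fresh nominal `j` is handled by
reassigning `j`, and the rule `(V)`, which only speaks about named models, by passing to the worlds
that have a name.

For completeness, suppose that a labelled sequent is not derivable. Contraction lets us keep every
formula that is decomposed, and since formulas are countable, a Rasiowa–Sikorski argument yields an
increasing sequence of underivable sequents along which every decomposition is eventually carried
out. Weakening being admissible for `(V)`, the elementary formulas in any finite part of the union
of this sequence hold together in some model. On the nominals these models have a limit, in which
every elementary formula of the union keeps its value; as all worlds of the limit are named, an
induction on weight extends this to all formulas of the union. So the original sequent has a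
countermodel.
-/

/-- An injective coding of formulas by natural numbers, which shows that there are only countably
many of them. -/
def Form.code : Form → ℕ
  | .prop p => Nat.pair 0 p
  | .nom i => Nat.pair 1 i
  | .rel i j => Nat.pair 2 (Nat.pair i j)
  | .and φ ψ => Nat.pair 3 (Nat.pair φ.code ψ.code)
  | .or φ ψ => Nat.pair 4 (Nat.pair φ.code ψ.code)
  | .imp φ ψ => Nat.pair 5 (Nat.pair φ.code ψ.code)
  | .neg φ => Nat.pair 6 φ.code
  | .at_ i φ => Nat.pair 7 (Nat.pair i φ.code)
  | .box φ => Nat.pair 8 φ.code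
  | .dia φ => Nat.pair 9 φ.code

theorem Form.code_injective : Function.Injective Form.code := by
  intro φ
  induction φ <;> intro ψ h <;> cases ψ <;>
    simp only [Form.code, Nat.pair_eq_pair, reduceCtorEq] at h <;> grind

instance : Countable Form := Form.code_injective.countable

/-! ### Reassigning nominals -/

/-- The model `M` with its assignment of nominals replaced by `g`. -/
def Model.withAssign (M : Model) (g : ℕ → M.W) : Model := { M with g := g }

theorem sat_withAssign_iff {M : Model} {g : ℕ → M.W} {φ : Form}
    (h : ∀ k, φ.occursF k → g k = M.g k) (w : M.W) :
    sat (M.withAssign g) w φ ↔ sat M w φ := by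
  induction φ generalizing w with
  | prop p => rfl
  | nom i => simp only [sat, Model.withAssign, h i rfl]
  | rel i j => simp only [sat, Model.withAssign, h i (.inl rfl), h j (.inr rfl)]
  | and φ ψ ihφ ihψ =>
    exact and_congr (ihφ (fun k hk => h k (.inl hk)) w) (ihψ (fun k hk => h k (.inr hk)) w)
  | or φ ψ ihφ ihψ =>
    exact or_congr (ihφ (fun k hk => h k (.inl hk)) w) (ihψ (fun k hk => h k (.inr hk)) w)
  | imp φ ψ ihφ ihψ =>
    exact or_congr (not_congr (ihφ (fun k hk => h k (.inl hk)) w))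
      (ihψ (fun k hk => h k (.inr hk)) w)
  | neg φ ih => exact not_congr (ih h w)
  | at_ i φ ih =>
    have hi : (M.withAssign g).g i = M.g i := h i (.inl rfl)
    simp only [sat, hi]
    exact ih (fun k hk => h k (.inr hk)) (M.g i)
  | box φ ih => exact forall_congr' fun v => imp_congr_right fun _ => ih h v
  | dia φ ih => exact exists_congr fun v => and_congr_right fun _ => ih h v

/-- The model `M` with the nominal `j` made a name of the world `v`. -/
def Model.reassign (M : Model) (j : ℕ) (v : M.W) : Model :=
  M.withAssign (Function.update M.g j v)

section Reassign

variable {M : Model} {i j : ℕ} {v : M.W}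

@[simp] theorem Model.reassign_g_self : (M.reassign j v).g j = v :=
  Function.update_self (β := fun _ => M.W) j v M.g

theorem Model.reassign_g_of_ne (h : i ≠ j) : (M.reassign j v).g i = M.g i :=
  Function.update_of_ne (β := fun _ => M.W) h v M.g

theorem sat_reassign_iff {φ : Form} (h : ¬ φ.occursF j) (w : M.W) :
    sat (M.reassign j v) w φ ↔ sat M w φ :=
  sat_withAssign_iff (fun k hk => Model.reassign_g_of_ne fun hkj : k = j => h (hkj ▸ hk)) w

end Reassign

/-- Truth of a member of a sequent in a model: a labelled formula is evaluated at its label, an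
unlabelled one at all worlds. -/
def LForm.Holds (M : Model) : LForm → Prop
  | .lab i φ => sat M (M.g i) φ
  | .plain φ => ∀ w, sat M w φ

@[simp] theorem LForm.holds_lab {M : Model} {i : ℕ} {φ : Form} :
    (LForm.lab i φ).Holds M ↔ sat M (M.g i) φ := Iff.rfl

theorem LForm.holds_reassign_iff {M : Model} {j : ℕ} {v : M.W} {f : LForm}
    (h : ¬ f.occursL j) : f.Holds (M.reassign j v) ↔ f.Holds M := by
  cases f with
  | lab i φ =>
    obtain ⟨hij, hφ⟩ := not_or.1 h
    simp only [LForm.holds_lab, Model.reassign_g_of_ne hij]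
    exact sat_reassign_iff hφ (M.g i)
  | plain φ => exact forall_congr' fun w => sat_reassign_iff (M := M) h w

/-! ### Limits of models -/

/-- The limit of a family of models along a filter. Its worlds are the nominals, identified when
they eventually name the same world, and its relation and valuation are the eventual ones: it is
the part of the reduced product that is named by constant nominals. -/
def Model.limit {ι : Type*} (l : Filter ι) (M : ι → Model) : Model where
  W := Quotient ((l.productSetoid fun x => (M x).W).comap fun i x => (M x).g i)
  ne := ⟨Quotient.mk _ 0⟩
  R := Quotient.lift₂ (fun i j => ∀ᶠ x in l, (M x).R ((M x).g i) ((M x).g j)) <| by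
    intro i j i' j' (hi : ∀ᶠ x in l, (M x).g i = (M x).g i')
      (hj : ∀ᶠ x in l, (M x).g j = (M x).g j')
    exact propext <| Filter.eventually_congr <| by
      filter_upwards [hi, hj] with x hxi hxj
      rw [hxi, hxj]
  V p := Quotient.lift (fun i => ∀ᶠ x in l, (M x).V p ((M x).g i)) <| by
    intro i i' (hi : ∀ᶠ x in l, (M x).g i = (M x).g i')
    exact propext <| Filter.eventually_congr <| hi.mono fun x hx => by rw [hx]
  g := Quotient.mk _

section Limit

variable {ι : Type*} {l : Filter ι} {M : ι → Model}

theorem Model.named_limit : (Model.limit l M).Named := Quotient.mk_surjective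

theorem sat_limit_iff {φ : Form} (hφ : φ.elemF) (i : ℕ) :
    sat (Model.limit l M) ((Model.limit l M).g i) φ ↔
      ∀ᶠ x in l, sat (M x) ((M x).g i) φ := by
  cases φ with
  | nom j => exact Quotient.eq
  | prop _ | rel _ _ => rfl
  | _ => exact hφ.elim

end Limit

/-! ### Soundness -/

/-- The sequent `Γ ⊢ Δ` is true in `M`. -/
def Model.Satisfies (M : Model) (Γ Δ : Multiset LForm) : Prop :=
  (∀ f ∈ Γ, f.Holds M) → ∃ f ∈ Δ, f.Holds M

section Sound

variable {M : Model} {Γ Δ : Multiset LForm} {i j : ℕ} {φ : Form}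

theorem SeqValid.satisfies (hΓ : ∀ f ∈ Γ, f.elemL) (hΔ : ∀ f ∈ Δ, f.elemL)
    (h : SeqValid Γ Δ) (M : Model) : M.Satisfies Γ Δ := by
  intro hM
  -- A limit of a constant family is the submodel of named worlds.
  have hcore {k : ℕ} {ψ : Form} (hψ : ψ.elemF) :
      sat (Model.limit (pure ()) fun _ => M) ((Model.limit (pure ()) fun _ => M).g k) ψ ↔
        sat M (M.g k) ψ :=
    (sat_limit_iff hψ k).trans Filter.eventually_pure
  rcases h _ Model.named_limit with ⟨k, ψ, hmem, hψ⟩ | ⟨k, ψ, hmem, hψ⟩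
  · exact ⟨_, hmem, (hcore (hΔ _ hmem)).1 hψ⟩
  · exact absurd ((hcore (hΓ _ hmem)).2 (hM _ hmem)) hψ

theorem Model.satisfies_plain_of_reassign (hi : ¬ φ.occursF i)
    (h : ∀ v, (M.reassign i v).Satisfies 0 {.lab i φ}) : M.Satisfies 0 {.plain φ} := by
  refine fun _ => ⟨_, Multiset.mem_singleton_self _, fun v => ?_⟩
  obtain ⟨f, hf, hholds⟩ := h v (by simp)
  obtain rfl := Multiset.mem_singleton.1 hf
  simpa only [LForm.Holds, Model.reassign_g_self, sat_reassign_iff hi] using hholds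

theorem Model.satisfies_box_right_of_reassign (hΓ : ∀ f ∈ Γ, ¬ f.occursL j)
    (hΔ : ∀ f ∈ Δ, ¬ f.occursL j) (hji : j ≠ i) (hφ : ¬ φ.occursF j)
    (h : ∀ v, (M.reassign j v).Satisfies Γ (.lab j (.or (.neg (.rel i j)) φ) ::ₘ Δ)) :
    M.Satisfies Γ (.lab i (.box φ) ::ₘ Δ) := by
  intro hM
  by_cases hside : ∃ f ∈ Δ, f.Holds M
  · obtain ⟨f, hf, hholds⟩ := hside
    exact ⟨f, Multiset.mem_cons_of_mem hf, hholds⟩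
  refine ⟨_, Multiset.mem_cons_self _ _, fun v hv => ?_⟩
  obtain ⟨f, hf, hholds⟩ := h v fun f hf => (LForm.holds_reassign_iff (hΓ f hf)).2 (hM f hf)
  rcases Multiset.mem_cons.1 hf with rfl | hf
  · simp only [LForm.holds_lab, sat, Model.reassign_g_self, Model.reassign_g_of_ne hji.symm,
      sat_reassign_iff hφ] at hholds
    exact hholds.resolve_left (not_not_intro hv)
  · exact absurd ⟨f, hf, (LForm.holds_reassign_iff (hΔ f hf)).1 hholds⟩ hside

theorem Model.satisfies_dia_left_of_reassign (hΓ : ∀ f ∈ Γ, ¬ f.occursL j)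
    (hΔ : ∀ f ∈ Δ, ¬ f.occursL j) (hji : j ≠ i) (hφ : ¬ φ.occursF j)
    (h : ∀ v, (M.reassign j v).Satisfies (.lab j (.and (.rel i j) φ) ::ₘ Γ) Δ) :
    M.Satisfies (.lab i (.dia φ) ::ₘ Γ) Δ := by
  intro hM
  obtain ⟨⟨v, hv, hsat⟩, hM⟩ := Multiset.forall_mem_cons.1 hM
  have hprem : ∀ f ∈ .lab j (.and (.rel i j) φ) ::ₘ Γ, f.Holds (M.reassign j v) := by
    refine Multiset.forall_mem_cons.2
      ⟨?_, fun f hf => (LForm.holds_reassign_iff (hΓ f hf)).2 (hM f hf)⟩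
    simp only [LForm.holds_lab, sat, Model.reassign_g_self, Model.reassign_g_of_ne hji.symm,
      sat_reassign_iff hφ]
    exact ⟨hv, hsat⟩
  obtain ⟨f, hf, hholds⟩ := h v hprem
  exact ⟨f, hf, (LForm.holds_reassign_iff (hΔ f hf)).1 hholds⟩

end Sound

theorem DS.sound {Γ Δ : Multiset LForm} (h : DS Γ Δ) (M : Model) : M.Satisfies Γ Δ := by
  induction h generalizing M with
  | V hΓ hΔ hvalid => exact hvalid.satisfies hΓ hΔ M
  | U hi _ ih => exact Model.satisfies_plain_of_reassign hi fun v => ih _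
  | Rbox hΓ hΔ hji hφ _ ih =>
    exact Model.satisfies_box_right_of_reassign hΓ hΔ hji hφ fun v => ih _
  | Ldia hΓ hΔ hji hφ _ ih =>
    exact Model.satisfies_dia_left_of_reassign hΓ hΔ hji hφ fun v => ih _
  | Lbox _ ih =>
    intro hM
    obtain ⟨hbox, hM⟩ := Multiset.forall_mem_cons.1 hM
    exact ih M (Multiset.forall_mem_cons.2 ⟨not_or_of_imp (hbox _), hM⟩)
  | _ =>
    simp only [Model.Satisfies, Multiset.mem_cons, exists_eq_or_imp, forall_eq_or_imp,
      LForm.holds_lab, sat] at *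
    grind

/-! ### Fresh nominals -/

theorem Form.finite_setOf_occursF (φ : Form) : {k | φ.occursF k}.Finite := by
  induction φ <;> simp_all [Form.occursF, Set.ofPred_or]

theorem Form.exists_not_occursF (φ : Form) : ∃ k, ¬ φ.occursF k :=
  φ.finite_setOf_occursF.exists_notMem

theorem LForm.finite_setOf_occursL (f : LForm) : {k | f.occursL k}.Finite := by
  cases f <;> simp [LForm.occursL, Set.ofPred_or, Form.finite_setOf_occursF]

theorem exists_fresh (i : ℕ) (φ : Form) (Γ Δ : Multiset LForm) :
    ∃ j, j ≠ i ∧ ¬ φ.occursF j ∧ (∀ f ∈ Γ, ¬ f.occursL j) ∧ ∀ f ∈ Δ, ¬ f.occursL j := by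
  have hΓ : (⋃ f ∈ {f | f ∈ Γ}, {k | f.occursL k}).Finite :=
    Γ.finite_toSet.biUnion fun f _ => f.finite_setOf_occursL
  have hΔ : (⋃ f ∈ {f | f ∈ Δ}, {k | f.occursL k}).Finite :=
    Δ.finite_toSet.biUnion fun f _ => f.finite_setOf_occursL
  obtain ⟨j, hj⟩ := (((Set.finite_singleton i).union φ.finite_setOf_occursF).union
    (hΓ.union hΔ)).exists_notMem
  exact ⟨j, by simpa [and_assoc] using hj⟩

/-! ### Signed formulas -/

/-- A signed labelled formula: `i : φ` together with the side of a sequent on which it stands,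
the antecedent for `isLeft = true`. Collecting both sides of a sequent in one multiset of signed
formulas allows dual rules to be treated at once. -/
structure SForm where
  isLeft : Bool
  label : ℕ
  form : Form

instance : Countable SForm :=
  Function.Injective.countable (f := fun s : SForm => (s.isLeft, s.label, s.form)) <| by
    rintro ⟨b, i, φ⟩ ⟨b', i', φ'⟩ h
    simpa only [SForm.mk.injEq, Prod.mk.injEq] using h

namespace SForm

/-- A model makes a signed formula hold if it agrees with its sign: a model in which all members of
a sequent hold is a countermodel of that sequent. -/
def Holds (M : Model) : SForm → Prop
  | ⟨true, i, φ⟩ => sat M (M.g i) φ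
  | ⟨false, i, φ⟩ => ¬ sat M (M.g i) φ

/-- The immediate components of a signed formula: the signed formulas that can replace it in the
premises of its rule. For modalities they range over all choices of the new label. -/
def components : SForm → Set SForm
  | ⟨b, i, .and φ ψ⟩ | ⟨b, i, .or φ ψ⟩ => {⟨b, i, φ⟩, ⟨b, i, ψ⟩}
  | ⟨b, i, .imp φ ψ⟩ => {⟨!b, i, φ⟩, ⟨b, i, ψ⟩}
  | ⟨b, i, .neg φ⟩ => {⟨!b, i, φ⟩}
  | ⟨b, _, .at_ j φ⟩ => {⟨b, j, φ⟩}
  | ⟨b, i, .box φ⟩ => Set.range fun j => ⟨b, j, .or (.neg (.rel i j)) φ⟩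
  | ⟨b, i, .dia φ⟩ => Set.range fun j => ⟨b, j, .and (.rel i j) φ⟩
  | _ => ∅

/-- Conjunctive signed formulas hold if all their components do (Smullyan's types `α` and `γ`);
the others hold if some component does (types `β` and `δ`). Elementary formulas, which have no
components, count as conjunctive. -/
def IsConj : SForm → Prop
  | ⟨b, _, .and _ _⟩ | ⟨b, _, .box _⟩ => b = true
  | ⟨b, _, .or _ _⟩ | ⟨b, _, .imp _ _⟩ | ⟨b, _, .dia _⟩ => b = false
  | _ => True

end SForm

/-- A weight of formulas that decreases from a signed formula to its components; a modality counts
for the two connectives of its component and itself. -/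
def Form.weight : Form → ℕ
  | .prop _ | .nom _ | .rel _ _ => 0
  | .and φ ψ | .or φ ψ | .imp φ ψ => φ.weight + ψ.weight + 1
  | .neg φ | .at_ _ φ => φ.weight + 1
  | .box φ | .dia φ => φ.weight + 3

namespace SForm

variable {M : Model} {s c : SForm}

theorem weight_lt_of_mem_components (hc : c ∈ s.components) : c.form.weight < s.form.weight := by
  obtain ⟨b, i, φ⟩ := s
  cases φ <;>
    simp only [components, Set.mem_insert_iff, Set.mem_singleton_iff, Set.mem_range,
      Set.mem_empty_iff_false] at hc <;>
    grind [Form.weight]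

theorem components_nonempty (hs : ¬ s.form.elemF) : s.components.Nonempty := by
  obtain ⟨b, i, φ⟩ := s
  cases φ with
  | prop _ | nom _ | rel _ _ => exact absurd trivial hs
  | box _ | dia _ => exact Set.range_nonempty _
  | _ => simp [components]

theorem holds_of_forall_components (hM : M.Named) (hs : ¬ s.form.elemF) (hconj : s.IsConj)
    (h : ∀ c ∈ s.components, c.Holds M) : s.Holds M := by
  obtain ⟨b, i, φ⟩ := s
  cases b <;> cases φ <;>
    simp only [components, Set.mem_insert_iff, Set.mem_singleton_iff, Set.forall_mem_range,
      forall_eq_or_imp, forall_eq, IsConj, Form.elemF, Holds, sat, hM.forall, hM.exists] at * <;>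
    grind

theorem holds_of_exists_components (hdisj : ¬ s.IsConj)
    (h : ∃ c ∈ s.components, c.Holds M) : s.Holds M := by
  obtain ⟨b, i, φ⟩ := s
  cases b <;> cases φ <;>
    simp only [components, Set.mem_insert_iff, Set.mem_singleton_iff, Set.exists_range_iff,
      exists_eq_or_imp, exists_eq_left, IsConj, Holds, sat] at * <;>
    grind

end SForm

/-! ### Derivability of signed sequents -/

/-- The antecedent (`b = true`) or succedent (`b = false`) of a sequent of signed formulas. -/
def side (b : Bool) (S : Multiset SForm) : Multiset LForm :=
  (S.filter (·.isLeft = b)).map fun s => .lab s.label s.form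

/-- Derivability in `DS` of a sequent given as a multiset of signed formulas. -/
def Derivable (S : Multiset SForm) : Prop := DS (side true S) (side false S)

theorem side_cons (b b' : Bool) (i : ℕ) (φ : Form) (S : Multiset SForm) :
    side b (⟨b', i, φ⟩ ::ₘ S) = if b' = b then .lab i φ ::ₘ side b S else side b S := by
  split_ifs with h <;> simp [side, h]

theorem mem_side {b : Bool} {S : Multiset SForm} {f : LForm} :
    f ∈ side b S ↔ ∃ i φ, ⟨b, i, φ⟩ ∈ S ∧ .lab i φ = f := by
  constructor
  · intro hf
    obtain ⟨⟨b', i, φ⟩, hs, rfl⟩ := Multiset.mem_map.1 hf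
    obtain rfl : b' = b := (Multiset.mem_filter.1 hs).2
    exact ⟨i, φ, Multiset.mem_of_mem_filter hs, rfl⟩
  · rintro ⟨i, φ, hs, rfl⟩
    exact Multiset.mem_map.2 ⟨_, Multiset.mem_filter.2 ⟨hs, rfl⟩, rfl⟩

namespace Derivable

variable {S : Multiset SForm} {s c : SForm}

theorem of_mem (hs : s ∈ S) (h : Derivable (s ::ₘ S)) : Derivable S := by
  obtain ⟨S, rfl⟩ := Multiset.exists_cons_of_mem hs
  obtain ⟨_ | _, i, φ⟩ := s <;> simp only [Derivable, side_cons] at h ⊢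
  exacts [.CR h, .CL h]

theorem of_forall_elemF (hS : ∀ s ∈ S, s.form.elemF)
    (h : ∀ M : Model, M.Named → ∃ s ∈ S, ¬ s.Holds M) : Derivable S := by
  have helem (b : Bool) : ∀ f ∈ side b S, f.elemL := by
    intro f hf
    obtain ⟨i, φ, hs, rfl⟩ := mem_side.1 hf
    exact hS _ hs
  refine .V (helem true) (helem false) fun M hM => ?_
  obtain ⟨⟨_ | _, i, φ⟩, hs, hfail⟩ := h M hM
  · exact .inl ⟨i, φ, mem_side.2 ⟨i, φ, hs, rfl⟩, not_not.1 hfail⟩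
  · exact .inr ⟨i, φ, mem_side.2 ⟨i, φ, hs, rfl⟩, hfail⟩

theorem cons_of_mem_components (hconj : s.IsConj) (hc : c ∈ s.components)
    (h : Derivable (c ::ₘ S)) : Derivable (s ::ₘ S) := by
  obtain ⟨b, i, φ⟩ := s
  cases φ with
  | prop _ | nom _ | rel _ _ => exact hc.elim
  | and φ ψ =>
    obtain rfl : b = true := hconj
    rcases hc with rfl | rfl <;> simp only [Derivable, side_cons] at h ⊢
    exacts [.Land1 h, .Land2 h]
  | or φ ψ =>
    obtain rfl : b = false := hconj
    rcases hc with rfl | rfl <;> simp only [Derivable, side_cons] at h ⊢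
    exacts [.Ror1 h, .Ror2 h]
  | imp φ ψ =>
    obtain rfl : b = false := hconj
    rcases hc with rfl | rfl <;> simp only [Derivable, side_cons] at h ⊢
    exacts [.Rimp1 h, .Rimp2 h]
  | neg φ =>
    obtain rfl := hc
    cases b <;> simp only [Derivable, side_cons] at h ⊢
    exacts [.Rneg h, .Lneg h]
  | at_ j φ =>
    obtain rfl := hc
    cases b <;> simp only [Derivable, side_cons] at h ⊢
    exacts [.Rat h, .Lat h]
  | box φ =>
    obtain rfl : b = true := hconj
    obtain ⟨j, rfl⟩ := hc
    simp only [Derivable, side_cons] at h ⊢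
    exact .Lbox h
  | dia φ =>
    obtain rfl : b = false := hconj
    obtain ⟨j, rfl⟩ := hc
    simp only [Derivable, side_cons] at h ⊢
    exact .Rdia h

theorem cons_of_forall_components (hdisj : ¬ s.IsConj)
    (h : ∀ c ∈ s.components, Derivable (c ::ₘ S)) : Derivable (s ::ₘ S) := by
  obtain ⟨b, i, φ⟩ := s
  cases φ with
  | prop _ | nom _ | rel _ _ | neg _ | at_ _ _ => exact (hdisj trivial).elim
  | and φ ψ =>
    obtain rfl : b = false := eq_false_of_ne_true hdisj
    have hφ := h _ (.inl rfl)
    have hψ := h _ (.inr rfl)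
    simp only [Derivable, side_cons] at hφ hψ ⊢
    exact .Rand hφ hψ
  | or φ ψ =>
    obtain rfl : b = true := eq_true_of_ne_false hdisj
    have hφ := h _ (.inl rfl)
    have hψ := h _ (.inr rfl)
    simp only [Derivable, side_cons] at hφ hψ ⊢
    exact .Lor hφ hψ
  | imp φ ψ =>
    obtain rfl : b = true := eq_true_of_ne_false hdisj
    have hφ := h _ (.inl rfl)
    have hψ := h _ (.inr rfl)
    simp only [Derivable, side_cons] at hφ hψ ⊢
    exact .Limp hφ hψ
  | box φ =>
    obtain rfl : b = false := eq_false_of_ne_true hdisj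
    obtain ⟨j, hji, hjφ, hleft, hright⟩ := exists_fresh i φ (side true S) (side false S)
    have hj := h _ ⟨j, rfl⟩
    simp only [Derivable, side_cons] at hj ⊢
    exact .Rbox hleft hright hji hjφ hj
  | dia φ =>
    obtain rfl : b = true := eq_true_of_ne_false hdisj
    obtain ⟨j, hji, hjφ, hleft, hright⟩ := exists_fresh i φ (side true S) (side false S)
    have hj := h _ ⟨j, rfl⟩
    simp only [Derivable, side_cons] at hj ⊢
    exact .Ldia hleft hright hji hjφ hj

theorem of_forall_exists_elemF
    (h : ∀ M : Model, M.Named → ∃ s ∈ S, s.form.elemF ∧ ¬ s.Holds M) : Derivable S := by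
  induction hw : (S.map fun s => s.form.weight).sum using Nat.strong_induction_on
    generalizing S with
  | _ w ih =>
  subst hw
  by_cases hS : ∀ s ∈ S, s.form.elemF
  · refine of_forall_elemF hS fun M hM => ?_
    obtain ⟨s, hs, -, hfail⟩ := h M hM
    exact ⟨s, hs, hfail⟩
  push Not at hS
  obtain ⟨s, hs, hcomplex⟩ := hS
  obtain ⟨S, rfl⟩ := Multiset.exists_cons_of_mem hs
  have hcomponent : ∀ c ∈ s.components, Derivable (c ::ₘ S) := by
    intro c hc
    refine ih _ ?_ (fun M hM => ?_) rfl
    · simpa using SForm.weight_lt_of_mem_components hc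
    · obtain ⟨t, ht, helem, hfail⟩ := h M hM
      have htS : t ∈ S := (Multiset.mem_cons.1 ht).resolve_left fun hts => hcomplex (hts ▸ helem)
      exact ⟨t, Multiset.mem_cons_of_mem htS, helem, hfail⟩
  by_cases hconj : s.IsConj
  · obtain ⟨c, hc⟩ := SForm.components_nonempty hcomplex
    exact cons_of_mem_components hconj hc (hcomponent c hc)
  · exact cons_of_forall_components hconj hcomponent

end Derivable

theorem exists_model_of_not_derivable {S : Multiset SForm} (hS : ¬ Derivable S) :
    ∃ M : Model, ∀ s ∈ S, s.form.elemF → s.Holds M := by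
  by_contra! h
  exact hS (.of_forall_exists_elemF fun M _ => h M)

/-! ### Hintikka sets -/

/-- A Hintikka set of signed formulas: it is closed under decomposition, and the elementary
formulas in any finite part of it hold together in some model. -/
structure IsHintikka (H : Set SForm) : Prop where
  mem_of_isConj : ∀ s ∈ H, s.IsConj → ∀ c ∈ s.components, c ∈ H
  exists_mem_of_not_isConj : ∀ s ∈ H, ¬ s.IsConj → ∃ c ∈ s.components, c ∈ H
  exists_model : ∀ E : Finset SForm, ↑E ⊆ H → ∃ M : Model, ∀ s ∈ E, s.form.elemF → s.Holds M

theorem SForm.holds_limit {ι : Type*} {l : Filter ι} [l.NeBot] {M : ι → Model} {s : SForm}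
    (hs : s.form.elemF) (h : ∀ᶠ x in l, s.Holds (M x)) : s.Holds (Model.limit l M) := by
  obtain ⟨_ | _, i, φ⟩ := s
  · intro hsat
    obtain ⟨x, hx, hnx⟩ := (((sat_limit_iff hs i).1 hsat).and h).exists
    exact hnx hx
  · exact (sat_limit_iff hs i).2 h

theorem IsHintikka.exists_named_model {H : Set SForm} (hH : IsHintikka H) :
    ∃ M : Model, M.Named ∧ ∀ s ∈ H, s.Holds M := by
  classical
  choose M hM using fun E : Finset SForm =>
    hH.exists_model {s ∈ E | s ∈ H} fun s hs => (Finset.mem_filter.1 hs).2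
  refine ⟨Model.limit Filter.atTop M, Model.named_limit, fun s hs => ?_⟩
  induction hw : s.form.weight using Nat.strong_induction_on generalizing s with
  | _ w ih =>
  subst hw
  have hcomponent : ∀ c ∈ s.components, c ∈ H → c.Holds (Model.limit Filter.atTop M) :=
    fun c hc hcH => ih _ (SForm.weight_lt_of_mem_components hc) c hcH rfl
  by_cases helem : s.form.elemF
  · refine SForm.holds_limit helem ?_
    filter_upwards [Filter.eventually_ge_atTop {s}] with E hE
    exact hM E s (Finset.mem_filter.2 ⟨Finset.singleton_subset_iff.1 hE, hs⟩) helem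
  by_cases hconj : s.IsConj
  · exact SForm.holds_of_forall_components Model.named_limit helem hconj fun c hc =>
      hcomponent c hc (hH.mem_of_isConj s hs hconj c hc)
  · obtain ⟨c, hc, hcH⟩ := hH.exists_mem_of_not_isConj s hs hconj
    exact SForm.holds_of_exists_components hconj ⟨c, hc, hcomponent c hc hcH⟩

/-! ### Completeness -/

/-- `A i` is the set of stages at which the obligation `i` is present, `B i` the set of those at
which it is met. An obligation may arise after its turn, so the cofinal set for `i` consists of the
stages at which `i` is met or can no longer arise. -/
theorem exists_monotone_seq_forall_exists_mem {P ι : Type*} [Preorder P] [Countable ι] (p : P)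
    {A B : ι → Set P} (hA : ∀ i, IsUpperSet (A i)) (hAB : ∀ i, ∀ q ∈ A i, ∃ r ∈ B i, q ≤ r) :
    ∃ u : ℕ → P, Monotone u ∧ u 0 = p ∧ ∀ i n, u n ∈ A i → ∃ m, u m ∈ B i := by
  have := Encodable.ofCountable ι
  let D (i : ι) : Order.Cofinal P :=
    { carrier := {q | q ∈ B i ∨ ∀ r, q ≤ r → r ∉ A i}
      isCofinal := by
        intro q
        by_cases h : ∃ r, q ≤ r ∧ r ∈ A i
        · obtain ⟨r, hqr, hr⟩ := h
          obtain ⟨t, ht, hrt⟩ := hAB i r hr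
          exact ⟨t, .inl ht, hqr.trans hrt⟩
        · push Not at h
          exact ⟨q, .inr h, le_rfl⟩ }
  have hmono := Order.sequenceOfCofinals.monotone p D
  refine ⟨Order.sequenceOfCofinals p D, hmono, rfl, fun i n hn => ?_⟩
  rcases Order.sequenceOfCofinals.encode_mem p D i with h | h
  · exact ⟨_, h⟩
  · exact absurd (hA i (hmono (le_max_right _ n)) hn) (h _ (hmono (le_max_left _ n)))

theorem exists_decomposition_of_not_derivable {S : Multiset SForm} {s : SForm}
    (hS : ¬ Derivable S) (hs : s ∈ S) (c : SForm) :
    ∃ T, ¬ Derivable T ∧ S ≤ T ∧ (s.IsConj → c ∈ s.components → c ∈ T) ∧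
      (¬ s.IsConj → ∃ d ∈ s.components, d ∈ T) := by
  by_cases hconj : s.IsConj
  · by_cases hc : c ∈ s.components
    · exact ⟨c ::ₘ S, fun h => hS (.of_mem hs (.cons_of_mem_components hconj hc h)),
        Multiset.le_cons_self S c, fun _ _ => Multiset.mem_cons_self c S, (absurd hconj ·)⟩
    · exact ⟨S, hS, le_rfl, fun _ => (absurd · hc), (absurd hconj ·)⟩
  · obtain ⟨d, hd, hdS⟩ : ∃ d ∈ s.components, ¬ Derivable (d ::ₘ S) := by
      by_contra! h
      exact hS (.of_mem hs (.cons_of_forall_components hconj h))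
    exact ⟨d ::ₘ S, hdS, Multiset.le_cons_self S d, (absurd · hconj),
      fun _ => ⟨d, hd, Multiset.mem_cons_self d S⟩⟩

theorem exists_isHintikka_of_not_derivable {S : Multiset SForm} (hS : ¬ Derivable S) :
    ∃ H, IsHintikka H ∧ ∀ s ∈ S, s ∈ H := by
  obtain ⟨u, hmono, hu0, hu⟩ := exists_monotone_seq_forall_exists_mem
    (P := {T : Multiset SForm // ¬ Derivable T}) (ι := SForm × SForm) ⟨S, hS⟩
    (A := fun x => {T | x.1 ∈ T.1})
    (B := fun x => {T | (x.1.IsConj → x.2 ∈ x.1.components → x.2 ∈ T.1) ∧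
      (¬ x.1.IsConj → ∃ d ∈ x.1.components, d ∈ T.1)})
    (fun _ _ _ hTT' hT => Multiset.mem_of_le hTT' hT)
    (fun x T hx => by
      obtain ⟨T', hT', hle, hdec⟩ := exists_decomposition_of_not_derivable T.2 hx x.2
      exact ⟨⟨T', hT'⟩, hdec, hle⟩)
  refine ⟨{s | ∃ n, s ∈ (u n).1}, ⟨?_, ?_, fun E hE => ?_⟩, fun s hs => ⟨0, by rwa [hu0]⟩⟩
  · rintro s ⟨n, hn⟩ hconj c hc
    obtain ⟨m, hm, -⟩ := hu (s, c) n hn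
    exact ⟨m, hm hconj hc⟩
  · rintro s ⟨n, hn⟩ hdisj
    obtain ⟨m, -, hm⟩ := hu (s, s) n hn
    obtain ⟨d, hd, hdm⟩ := hm hdisj
    exact ⟨d, hd, m, hdm⟩
  · have hsets : Monotone fun n => {s | s ∈ (u n).1} :=
      fun _ _ hmn _ hs => Multiset.mem_of_le (hmono hmn) hs
    obtain ⟨n, hn⟩ := hsets.directed_le.exists_mem_subset_of_finset_subset_biUnion
      (s := E) fun s hs => Set.mem_iUnion.2 (hE hs)
    obtain ⟨M, hM⟩ := exists_model_of_not_derivable (u n).2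
    exact ⟨M, fun s hs => hM s (hn hs)⟩

theorem Derivable.of_forall_exists {S : Multiset SForm}
    (h : ∀ M : Model, M.Named → ∃ s ∈ S, ¬ s.Holds M) : Derivable S := by
  by_contra hS
  obtain ⟨H, hH, hSH⟩ := exists_isHintikka_of_not_derivable hS
  obtain ⟨M, hM, hholds⟩ := hH.exists_named_model
  obtain ⟨s, hs, hfail⟩ := h M hM
  exact hfail (hholds s (hSH s hs))

theorem DS.complete {φ : Form} (h : Valid φ) : DS 0 {.plain φ} := by
  obtain ⟨i, hi⟩ := φ.exists_not_occursF
  have hderiv : Derivable {⟨false, i, φ⟩} :=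
    .of_forall_exists fun M _ => ⟨_, Multiset.mem_singleton_self _, not_not_intro (h M (M.g i))⟩
  exact .U hi hderiv

/-- (Theorem 3) Soundness and completeness of `DS`: `⊢ φ` is provable in `DS` iff `φ` is valid. -/
theorem ds_provable_iff_valid (φ : Form) :
    DS 0 {LForm.plain φ} ↔ Valid φ := by
  refine ⟨fun h M => ?_, DS.complete⟩
  obtain ⟨f, hf, hholds⟩ := h.sound M (by simp)
  obtain rfl := Multiset.mem_singleton.1 hf
  exact hholds
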